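/- Let $\Psi \in C_c^\infty(\mathbb{R}^2)$ be nonnegative with $\int \Psi = 1$ and support in $(-\pi,\pi)^2$, let $\Psi_\rho(x) = \rho^{-2}\Psi(x/\rho)$ and let $\psi_\rho$ denote its periodization on $\mathbb{T}^2$. Let $D_N$ be the Dirichlet kernel projecting onto Fourier modes $|\vec{k}|_\infty \le N$, and let $K_N = D_N \ast \psi_{\rho_N}$ with $\rho_N \sim N^{-1+\delta}$ for some $\delta > 0$. Then $\|\psi_{\rho_N} - K_N\|_{L^1(\mathbb{T}^2)} \to 0$ as $N \to \infty$, and consequently $\|K_N\|_{L^1}$ is uniformly bounded in $N$. -/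

import Mathlib

open MeasureTheory Real
open scoped ENNReal

noncomputable section

/-- Rescaled mollifier `Ψ_ρ(x) = ρ⁻² Ψ(x/ρ)` on `ℝ²`. -/
noncomputable def scaled (Ψ : ℝ × ℝ → ℝ) (ρ : ℝ) (x : ℝ × ℝ) : ℝ :=
  ρ⁻¹ ^ 2 * Ψ (ρ⁻¹ • x)

/-- Periodization of a function on `ℝ²` over the lattice `2πℤ²`. -/
noncomputable def periodize (g : ℝ × ℝ → ℝ) (x : ℝ × ℝ) : ℝ :=
  ∑' n : ℤ × ℤ, g (x.1 + 2 * π * n.1, x.2 + 2 * π * n.2)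

/-- The two-dimensional Dirichlet kernel `D_N(x) = ∑_{|k|_∞ ≤ N} e^{ik·x}`. -/
noncomputable def dirichlet (N : ℕ) (x : ℝ × ℝ) : ℂ :=
  ∑ k ∈ Finset.Icc (-(N : ℤ)) N ×ˢ Finset.Icc (-(N : ℤ)) N,
    Complex.exp (Complex.I * ((k.1 : ℝ) * x.1 + (k.2 : ℝ) * x.2))

/-- A fundamental domain `[0,2π)² ⊂ ℝ²` for the torus `𝕋²`. -/
def Q : Set (ℝ × ℝ) := Set.Ioc 0 (2 * π) ×ˢ Set.Ioc 0 (2 * π)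

/-- `K_N = D_N ∗ ψ_{ρ}`: projection of the periodized mollifier onto Fourier modes
`|k|_∞ ≤ N`, realized as the (normalized) convolution on the torus. -/
noncomputable def KN (Ψ : ℝ × ℝ → ℝ) (ρ : ℝ) (N : ℕ) (x : ℝ × ℝ) : ℂ :=
  (1 / (2 * π) ^ 2 : ℂ) *
    ∫ y in Q, dirichlet N (x - y) * ((periodize (scaled Ψ ρ) y : ℝ) : ℂ)

/-! By Poisson summation the Fourier coefficients of `ψ_ρ` are `(2π)⁻² Ψ̂(ρk)`, and `Ψ̂` decays
faster than any power, so `ψ_ρ - D_N ∗ ψ_ρ`, the sum of the modes `|k|_∞ > N`, is bounded uniformly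
by `C ρ^{-(p+3)} N^{-p}` for every `p`. When `ρ ≳ N^{-1+δ}` this is `O(N^{3-(p+3)δ})`, which tends
to `0` once `p > 3/δ`; on the finite-measure torus the `L¹` norm follows. Since unfolding the
periodization gives `‖ψ_ρ‖₁ ≤ ‖Ψ‖₁`, the triangle inequality bounds `‖K_N‖₁`. -/

open Filter Topology
open scoped SchwartzMap FourierTransform

/-! ### Fourier inversion on `ℝ²/2πℤ²` -/

/-- The plane wave `x ↦ e^{iξ·x}` with frequency `ξ`. -/
def planeWave (ξ x : ℝ × ℝ) : ℂ :=
  Complex.exp (Complex.I * (ξ.1 * x.1 + ξ.2 * x.2))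

/-- The integer frequencies `ℤ²`, embedded in `ℝ²`. -/
def freq : ℤ × ℤ →+ ℝ × ℝ := (Int.castAddHom ℝ).prodMap (Int.castAddHom ℝ)

/-- The period lattice `2πℤ²`, parametrized by `ℤ²`. -/
def period : ℤ × ℤ →+ ℝ × ℝ := (DistribSMul.toAddMonoidHom (ℝ × ℝ) (2 * π)).comp freq

lemma freq_apply (k : ℤ × ℤ) : freq k = ((k.1 : ℝ), (k.2 : ℝ)) := rfl

lemma period_apply (n : ℤ × ℤ) : period n = (2 * π * n.1, 2 * π * n.2) := rfl

/-- The Fourier coefficient `(2π)⁻² ∫_Q e^{-ik·y} f(y) dy` of a function on the torus `ℝ²/2πℤ²`. -/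
def torusCoeff (f : ℝ × ℝ → ℂ) (k : ℤ × ℤ) : ℂ :=
  (1 / (2 * π) ^ 2 : ℂ) * ∫ y in Q, planeWave (-freq k) y * f y

lemma norm_planeWave (ξ x : ℝ × ℝ) : ‖planeWave ξ x‖ = 1 := by
  rw [planeWave, mul_comm]
  exact_mod_cast Complex.norm_exp_ofReal_mul_I (ξ.1 * x.1 + ξ.2 * x.2)

lemma continuous_planeWave (ξ : ℝ × ℝ) : Continuous (planeWave ξ) := by
  unfold planeWave
  fun_prop

lemma planeWave_add_right (ξ x y : ℝ × ℝ) :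
    planeWave ξ (x + y) = planeWave ξ x * planeWave ξ y := by
  rw [planeWave, planeWave, planeWave, ← Complex.exp_add]
  congr 1
  push_cast [Prod.fst_add, Prod.snd_add]
  ring

lemma planeWave_neg_right (ξ x : ℝ × ℝ) : planeWave ξ (-x) = planeWave (-ξ) x := by
  simp [planeWave]

lemma planeWave_smul_right (r : ℝ) (ξ x : ℝ × ℝ) :
    planeWave ξ (r • x) = planeWave (r • ξ) x := by
  simp only [planeWave, Prod.smul_fst, Prod.smul_snd, smul_eq_mul, Complex.ofReal_mul]
  ring_nf

lemma planeWave_freq_period (k n : ℤ × ℤ) : planeWave (freq k) (period n) = 1 := by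
  rw [planeWave, Complex.exp_eq_one_iff]
  refine ⟨k.1 * n.1 + k.2 * n.2, ?_⟩
  simp only [freq_apply, period_apply]
  push_cast
  ring

lemma norm_freq (k : ℤ × ℤ) : ‖freq k‖ = ‖k‖ := by
  simp [freq_apply, Prod.norm_def, Int.norm_eq_abs]

lemma periodize_eq_tsum_add_period (g : ℝ × ℝ → ℝ) (x : ℝ × ℝ) :
    periodize g x = ∑' n, g (x + period n) := rfl

lemma periodize_add_period (g : ℝ × ℝ → ℝ) (x : ℝ × ℝ) (n : ℤ × ℤ) :
    periodize g (x + period n) = periodize g x := by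
  simp only [periodize_eq_tsum_add_period, add_assoc, ← map_add]
  exact (Equiv.addLeft n).tsum_eq fun m => g (x + period m)

/-- The quotient map `ℝ² → ℝ²/2πℤ²`, with the torus rescaled to `(ℝ/ℤ)²`. -/
def toUnitTorus (x : ℝ × ℝ) : UnitAddTorus (Fin 2) :=
  fun i => (((2 * π)⁻¹ * ![x.1, x.2] i : ℝ) : UnitAddCircle)

lemma isOpenQuotientMap_toUnitTorus : IsOpenQuotientMap toUnitTorus :=
  (IsOpenQuotientMap.piMap fun _ : Fin 2 =>
      (QuotientAddGroup.isOpenQuotientMap_mk : IsOpenQuotientMap ((↑) : ℝ → UnitAddCircle))).comp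
    (Homeomorph.finTwoArrow.symm.trans
      (Homeomorph.smulOfNeZero (2 * π)⁻¹ (inv_ne_zero two_pi_pos.ne'))).isOpenQuotientMap

lemma exists_eq_add_period_of_toUnitTorus_eq {x y : ℝ × ℝ} (h : toUnitTorus x = toUnitTorus y) :
    ∃ n, x = y + period n := by
  have coord (a b : ℝ) (hab : (((2 * π)⁻¹ * a : ℝ) : UnitAddCircle) = ((2 * π)⁻¹ * b : ℝ)) :
      ∃ m : ℤ, a = b + 2 * π * m := by
    obtain ⟨m, hm⟩ := (AddCircle.coe_eq_zero_iff (1 : ℝ) (x := (2 * π)⁻¹ * a - (2 * π)⁻¹ * b)).mp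
      (by rw [AddCircle.coe_sub, hab, sub_self])
    refine ⟨m, ?_⟩
    rw [zsmul_eq_mul, mul_one, ← mul_sub, eq_inv_mul_iff_mul_eq₀ two_pi_pos.ne'] at hm
    rw [hm, add_sub_cancel]
  obtain ⟨a, ha⟩ := coord _ _ (congrFun h 0)
  obtain ⟨b, hb⟩ := coord _ _ (congrFun h 1)
  exact ⟨(a, b), Prod.ext ha hb⟩

lemma mFourier_toUnitTorus (k : Fin 2 → ℤ) (x : ℝ × ℝ) :
    UnitAddTorus.mFourier k (toUnitTorus x) = planeWave (freq (k 0, k 1)) x := by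
  simp only [UnitAddTorus.mFourier, ContinuousMap.coe_mk, Fin.prod_univ_two, toUnitTorus,
    fourier_coe_apply, ← Complex.exp_add, planeWave]
  congr 1
  simp only [Matrix.cons_val_zero, Matrix.cons_val_one, freq_apply]
  push_cast
  field_simp

open scoped Pointwise in
lemma two_pi_smul_Ioc_prod_Ioc : (2 * π) • Set.Ioc (0 : ℝ) 1 ×ˢ Set.Ioc (0 : ℝ) 1 = Q := by
  simp [Set.smul_set_prod, LinearOrderedField.smul_Ioc two_pi_pos, Q]

lemma setIntegral_unitSquare_comp_two_pi_smul {E : Type*} [NormedAddCommGroup E]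
    [NormedSpace ℝ E] (f : ℝ × ℝ → E) :
    ∫ u in {u : Fin 2 → ℝ | ∀ i, u i ∈ Set.Ioc 0 1}, f ((2 * π) • (u 0, u 1)) =
      ((2 * π) ^ 2)⁻¹ • ∫ y in Q, f y := by
  have cube : {u : Fin 2 → ℝ | ∀ i, u i ∈ Set.Ioc 0 1} =
      MeasurableEquiv.finTwoArrow ⁻¹' Set.Ioc (0 : ℝ) 1 ×ˢ Set.Ioc (0 : ℝ) 1 := by
    ext u
    simp [Fin.forall_fin_two]
  calc ∫ u in {u : Fin 2 → ℝ | ∀ i, u i ∈ Set.Ioc 0 1}, f ((2 * π) • (u 0, u 1))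
      = ∫ y in Set.Ioc (0 : ℝ) 1 ×ˢ Set.Ioc (0 : ℝ) 1, f ((2 * π) • y) := by
        rw [cube]
        exact (volume_preserving_finTwoArrow ℝ).setIntegral_preimage_emb
          (MeasurableEquiv.measurableEmbedding _) (fun y => f ((2 * π) • y)) _
    _ = ((2 * π) ^ 2)⁻¹ • ∫ y in Q, f y := by
        rw [Measure.setIntegral_comp_smul_of_pos _ _ _ two_pi_pos, two_pi_smul_Ioc_prod_Ioc]
        simp

lemma mFourierCoeff_eq_torusCoeff (F : UnitAddTorus (Fin 2) → ℂ) (k : Fin 2 → ℤ) :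
    UnitAddTorus.mFourierCoeff F k = torusCoeff (F ∘ toUnitTorus) (k 0, k 1) := by
  have lift (u : Fin 2 → ℝ) :
      (fun i => (u i : UnitAddCircle)) = toUnitTorus ((2 * π) • (u 0, u 1)) := by
    funext i
    fin_cases i <;> exact congrArg _ (inv_mul_cancel_left₀ two_pi_pos.ne' _).symm
  rw [UnitAddTorus.mFourierCoeff_eq_integral F k fun _ => 0]
  simp only [zero_add, lift, mFourier_toUnitTorus]
  rw [setIntegral_unitSquare_comp_two_pi_smul fun y =>
    planeWave (freq ((-k) 0, (-k) 1)) y • F (toUnitTorus y), torusCoeff, ← map_neg]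
  simp

theorem hasSum_torusCoeff_mul_planeWave {f : ℝ × ℝ → ℂ} (hf : Continuous f)
    (hper : ∀ x n, f (x + period n) = f x) (hs : Summable (torusCoeff f)) (x : ℝ × ℝ) :
    HasSum (fun k => torusCoeff f k * planeWave (freq k) x) (f x) := by
  let q : C(ℝ × ℝ, UnitAddTorus (Fin 2)) := ⟨toUnitTorus, isOpenQuotientMap_toUnitTorus.continuous⟩
  have hq : IsQuotientMap q := isOpenQuotientMap_toUnitTorus.isQuotientMap
  have hfactor : Function.FactorsThrough (⟨f, hf⟩ : C(ℝ × ℝ, ℂ)) q := fun y z hyz => by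
    obtain ⟨n, rfl⟩ := exists_eq_add_period_of_toUnitTorus_eq hyz
    exact hper z n
  let F : C(UnitAddTorus (Fin 2), ℂ) := hq.lift ⟨f, hf⟩ hfactor
  have hF : F ∘ toUnitTorus = f := congrArg DFunLike.coe (hq.lift_comp ⟨f, hf⟩ hfactor)
  have hcoeff (k : Fin 2 → ℤ) :
      UnitAddTorus.mFourierCoeff F k = torusCoeff f (finTwoArrowEquiv ℤ k) := by
    rw [mFourierCoeff_eq_torusCoeff, hF]
    rfl
  have hsum := UnitAddTorus.hasSum_mFourier_series_apply_of_summable (f := F)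
    (((finTwoArrowEquiv ℤ).summable_iff.mpr hs).congr fun k => (hcoeff k).symm) (toUnitTorus x)
  rw [← (finTwoArrowEquiv ℤ).hasSum_iff, ← congrFun hF x]
  simp only [hcoeff, mFourier_toUnitTorus, smul_eq_mul] at hsum
  exact hsum

/-! ### Unfolding and Poisson summation -/

lemma setIntegral_tsum_vadd {G α E : Type*} [AddGroup G] [Countable G] [AddAction G α]
    [MeasurableSpace α] [MeasurableConstVAdd G α] {μ : Measure α} [VAddInvariantMeasure G α μ]
    [NormedAddCommGroup E] [NormedSpace ℝ E] {s : Set α} (hs : IsAddFundamentalDomain G s μ)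
    {f : α → E} (hf : Integrable f μ) :
    ∫ x in s, ∑' g : G, f (g +ᵥ x) ∂μ = ∫ x, f x ∂μ := by
  rw [hs.integral_eq_tsum'' f hf]
  refine integral_tsum (fun g => ?_) ?_
  · exact (hf.1.comp_measurePreserving (measurePreserving_vadd g μ)).restrict
  · rw [← hs.lintegral_eq_tsum'' fun x => ‖f x‖ₑ]
    exact hf.2.ne

lemma period_injective : Function.Injective period := fun m n h => by
  simpa [period_apply, Prod.ext_iff, pi_ne_zero] using h

lemma existsUnique_add_period_mem_Q (x : ℝ × ℝ) : ∃! n, x + period n ∈ Q := by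
  obtain ⟨a, ha, ha'⟩ := existsUnique_add_zsmul_mem_Ioc two_pi_pos x.1 0
  obtain ⟨b, hb, hb'⟩ := existsUnique_add_zsmul_mem_Ioc two_pi_pos x.2 0
  simp only [zero_add, zsmul_eq_mul, mul_comm _ (2 * π)] at ha ha' hb hb'
  exact ⟨(a, b), ⟨ha, hb⟩, fun n hn => Prod.ext (ha' n.1 hn.1) (hb' n.2 hn.2)⟩

lemma measurableSet_Q : MeasurableSet Q := measurableSet_Ioc.prod measurableSet_Ioc

lemma isAddFundamentalDomain_Q : IsAddFundamentalDomain period.range Q := by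
  refine .mk' measurableSet_Q.nullMeasurableSet fun x => ?_
  refine (AddMonoidHom.ofInjective period_injective).bijective.existsUnique_iff.mpr ?_
  simpa only [add_comm x] using! existsUnique_add_period_mem_Q x

lemma setIntegral_tsum_add_period {E : Type*} [NormedAddCommGroup E] [NormedSpace ℝ E]
    {f : ℝ × ℝ → E} (hf : Integrable f) : ∫ x in Q, ∑' n, f (x + period n) = ∫ x, f x := by
  have : Countable period.range := (Set.countable_range period).to_subtype
  rw [← setIntegral_tsum_vadd isAddFundamentalDomain_Q hf]
  congr with x
  rw [← (AddMonoidHom.ofInjective period_injective).toEquiv.tsum_eq]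
  exact tsum_congr fun n => by rw [add_comm]; rfl

lemma volume_Q_lt_top : volume Q < ∞ :=
  ((Metric.isBounded_Ioc 0 (2 * π)).prod (Metric.isBounded_Ioc 0 (2 * π))).measure_lt_top

lemma integrableOn_Q_of_continuous {E : Type*} [NormedAddCommGroup E] {f : ℝ × ℝ → E}
    (hf : Continuous f) : IntegrableOn f Q :=
  (hf.integrableOn_Icc (a := (0, 0)) (b := (2 * π, 2 * π))).mono_set <| by
    rw [← Set.Icc_prod_Icc]
    exact Set.prod_mono Set.Ioc_subset_Icc_self Set.Ioc_subset_Icc_self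

/-- The Fourier transform `Ψ̂(ξ) = ∫ e^{-iξ·x} Ψ(x) dx` on `ℝ²`, in the normalization for which
`Ψ̂` at integer frequencies computes torus Fourier coefficients. -/
def planeFourier (Ψ : ℝ × ℝ → ℝ) (ξ : ℝ × ℝ) : ℂ :=
  ∫ x, planeWave (-ξ) x * Ψ x

lemma integral_inv_sq_smul_comp_inv_smul {E : Type*} [NormedAddCommGroup E] [NormedSpace ℝ E]
    (f : ℝ × ℝ → E) {r : ℝ} (hr : r ≠ 0) : ∫ x, r⁻¹ ^ 2 • f (r⁻¹ • x) = ∫ x, f x := by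
  rw [integral_smul, Measure.integral_comp_inv_smul, smul_smul]
  simp [hr]

lemma planeFourier_scaled (Ψ : ℝ × ℝ → ℝ) {r : ℝ} (hr : r ≠ 0) (ξ : ℝ × ℝ) :
    planeFourier (scaled Ψ r) ξ = planeFourier Ψ (r • ξ) := by
  rw [planeFourier, planeFourier,
    ← integral_inv_sq_smul_comp_inv_smul (fun y => planeWave (-(r • ξ)) y * Ψ y) hr]
  congr with x
  simp only [scaled, planeWave_smul_right, smul_neg, inv_smul_smul₀ hr, Complex.real_smul]
  push_cast
  ring

lemma integral_abs_scaled (Ψ : ℝ × ℝ → ℝ) {r : ℝ} (hr : r ≠ 0) :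
    ∫ x, |scaled Ψ r x| = ∫ x, |Ψ x| := by
  rw [← integral_inv_sq_smul_comp_inv_smul (fun y => |Ψ y|) hr]
  simp only [scaled, abs_mul, abs_pow, sq_abs, smul_eq_mul]

theorem torusCoeff_periodize {g : ℝ × ℝ → ℝ} (hg : Integrable g) (k : ℤ × ℤ) :
    torusCoeff (fun x => periodize g x) k = (1 / (2 * π) ^ 2 : ℂ) * planeFourier g (freq k) := by
  have hterm (x : ℝ × ℝ) : planeWave (-freq k) x * periodize g x =
      ∑' n, planeWave (-freq k) (x + period n) * g (x + period n) := by
    simp_rw [planeWave_add_right, ← map_neg, planeWave_freq_period, mul_one]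
    rw [tsum_mul_left, periodize_eq_tsum_add_period, Complex.ofReal_tsum]
  have hint : Integrable fun x => planeWave (-freq k) x * g x :=
    hg.ofReal.bdd_mul (continuous_planeWave _).aestronglyMeasurable
      (.of_forall fun x => (norm_planeWave _ x).le)
  simp_rw [torusCoeff, hterm]
  rw [setIntegral_tsum_add_period hint, planeFourier]

lemma abs_periodize_le (g : ℝ × ℝ → ℝ) (x : ℝ × ℝ) :
    |periodize g x| ≤ periodize (fun y => |g y|) x := by
  simp only [periodize_eq_tsum_add_period]
  by_cases hs : Summable fun n => |g (x + period n)|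
  · exact norm_tsum_le_tsum_norm (f := fun n => g (x + period n)) hs
  · rw [tsum_eq_zero_of_not_summable hs, tsum_eq_zero_of_not_summable (mt Summable.abs hs),
      abs_zero]

lemma setIntegral_abs_periodize_le {g : ℝ × ℝ → ℝ} (hg : Integrable g)
    (hQ : IntegrableOn (periodize fun y => |g y|) Q) :
    ∫ x in Q, |periodize g x| ≤ ∫ x, |g x| :=
  calc ∫ x in Q, |periodize g x|
      ≤ ∫ x in Q, periodize (fun y => |g y|) x :=
        integral_mono_of_nonneg (.of_forall fun _ => abs_nonneg _) hQ
          (.of_forall (abs_periodize_le g))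
    _ = ∫ x, |g x| := setIntegral_tsum_add_period hg.abs

/-! ### Schwartz decay of the Fourier transform and of the periodized series -/

/-- The pairing `⟨x, ξ⟩ = (2π)⁻¹ x·ξ`, for which `VectorFourier.fourierIntegral` with the character
`e^{2πi·}` becomes `planeFourier`. -/
def planePairing : ℝ × ℝ →L[ℝ] ℝ × ℝ →L[ℝ] ℝ :=
  (2 * π)⁻¹ • ((ContinuousLinearMap.mul ℝ ℝ).bilinearComp (.fst ℝ ℝ ℝ) (.fst ℝ ℝ ℝ) +
    (ContinuousLinearMap.mul ℝ ℝ).bilinearComp (.snd ℝ ℝ ℝ) (.snd ℝ ℝ ℝ))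

lemma planePairing_apply (x ξ : ℝ × ℝ) :
    planePairing x ξ = (2 * π)⁻¹ * (x.1 * ξ.1 + x.2 * ξ.2) := rfl

lemma planeFourier_eq_fourierIntegral (Ψ : ℝ × ℝ → ℝ) :
    planeFourier Ψ = VectorFourier.fourierIntegral 𝐞 volume planePairing.toLinearMap₁₂
      fun x => (Ψ x : ℂ) := by
  ext ξ
  refine integral_congr_ae (.of_forall fun x => ?_)
  have hexp : (𝐞 (-planePairing x ξ) : ℂ) = planeWave (-ξ) x := by
    rw [Real.fourierChar_apply, planeWave, planePairing_apply]
    congr 1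
    push_cast [Prod.fst_neg, Prod.snd_neg]
    field_simp
    ring
  simp only [← hexp]
  rfl

theorem exists_norm_pow_mul_norm_planeFourier_le (Ψ : 𝓢(ℝ × ℝ, ℝ)) (m : ℕ) :
    ∃ C, ∀ ξ, ‖ξ‖ ^ m * ‖planeFourier Ψ ξ‖ ≤ C := by
  let Ψc : 𝓢(ℝ × ℝ, ℂ) := Ψ.postcompCLM Complex.ofRealCLM
  have hdir (v : ℝ × ℝ) : ∃ C, ∀ ξ, |planePairing v ξ| ^ m * ‖planeFourier Ψ ξ‖ ≤ C :=
    ⟨_, fun ξ => by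
      have h := VectorFourier.pow_mul_norm_iteratedFDeriv_fourierIntegral_le planePairing
        (f := Ψc) (K := ⊤) (N := ⊤) (μ := volume) Ψc.smooth'
        (fun k n _ _ => Ψc.integrable_pow_mul_iteratedFDeriv volume k n) (k := 0) (n := m)
        le_top le_top v ξ
      rw [norm_iteratedFDeriv_zero] at h
      rw [planeFourier_eq_fourierIntegral]
      exact h⟩
  obtain ⟨C₁, h₁⟩ := hdir (2 * π, 0)
  obtain ⟨C₂, h₂⟩ := hdir (0, 2 * π)
  refine ⟨max C₁ C₂, fun ξ => ?_⟩
  simp only [planePairing_apply, zero_mul, add_zero, zero_add,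
    inv_mul_cancel_left₀ two_pi_pos.ne'] at h₁ h₂
  rcases max_choice ‖ξ.1‖ ‖ξ.2‖ with h | h <;> rw [Prod.norm_def, h]
  · exact (h₁ ξ).trans (le_max_left _ _)
  · exact (h₂ ξ).trans (le_max_right _ _)

lemma summable_norm_pow_three_inv : Summable fun k : ℤ × ℤ => (‖k‖ ^ 3)⁻¹ := by
  rw [← (finTwoArrowEquiv ℤ).summable_iff]
  refine (EisensteinSeries.summable_one_div_norm_rpow (k := 3) (by norm_num)).congr fun k => ?_
  rw [EisensteinSeries.norm_eq_max_natAbs, rpow_neg (by positivity), rpow_ofNat]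
  simp [Prod.norm_def, Int.norm_eq_abs, Nat.cast_natAbs]

lemma norm_period (n : ℤ × ℤ) : ‖period n‖ = 2 * π * ‖n‖ := by
  rw [← norm_freq, ← norm_of_nonneg two_pi_pos.le, ← norm_smul]
  rfl

theorem continuous_periodize {g : ℝ × ℝ → ℝ} (hg : Continuous g) {C : ℝ}
    (hdecay : ∀ y, ‖y‖ ^ 3 * |g y| ≤ C) : Continuous (periodize g) := by
  have hball (R : ℝ) : ContinuousOn (periodize g) (Metric.ball 0 R) := by
    have hu : Summable fun n : ℤ × ℤ => C * (‖n‖ ^ 3)⁻¹ := summable_norm_pow_three_inv.mul_left C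
    refine (tendstoUniformlyOn_tsum_of_cofinite_eventually hu ?_).continuousOn
      (.of_forall fun t => (continuous_finsetSum t fun n _ =>
        hg.comp (continuous_add_const (period n))).continuousOn)
    have hfar : ∀ᶠ n : ℤ × ℤ in cofinite, max R 1 ≤ ‖n‖ := by
      rw [← Filter.cocompact_eq_cofinite]
      exact tendsto_norm_cocompact_atTop.eventually_ge_atTop _
    filter_upwards [hfar] with n hn x hx
    obtain ⟨hR, h1⟩ := max_le_iff.mp hn
    have hle : ‖n‖ ≤ ‖x + period n‖ := by
      have htri := norm_sub_le (x + period n) x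
      rw [add_sub_cancel_left, norm_period] at htri
      nlinarith [mem_ball_zero_iff.mp hx, pi_gt_three]
    rw [← div_eq_mul_inv, le_div_iff₀' (by positivity)]
    exact (mul_le_mul_of_nonneg_right (pow_le_pow_left₀ (norm_nonneg n) hle 3)
      (norm_nonneg _)).trans (hdecay (x + period n))
  refine continuous_iff_continuousAt.mpr fun x =>
    (hball (‖x‖ + 1)).continuousAt (Metric.isOpen_ball.mem_nhds ?_)
  simp

lemma exists_coe_eq_scaled (Ψ : 𝓢(ℝ × ℝ, ℝ)) {r : ℝ} (hr : r ≠ 0) :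
    ∃ g : 𝓢(ℝ × ℝ, ℝ), ⇑g = scaled Ψ r :=
  ⟨r⁻¹ ^ 2 • SchwartzMap.compCLMOfContinuousLinearEquiv ℝ
    (.smulLeft (Units.mk0 r⁻¹ (inv_ne_zero hr))) Ψ, rfl⟩

lemma continuous_periodize_schwartz (g : 𝓢(ℝ × ℝ, ℝ)) : Continuous (periodize g) :=
  continuous_periodize g.continuous (g.norm_pow_mul_le_seminorm ℝ 3)

lemma setIntegral_abs_periodize_schwartz_le (g : 𝓢(ℝ × ℝ, ℝ)) :
    ∫ x in Q, |periodize g x| ≤ ∫ x, |g x| := by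
  refine setIntegral_abs_periodize_le g.integrable (integrableOn_Q_of_continuous ?_)
  refine continuous_periodize (C := SchwartzMap.seminorm ℝ 3 0 g) g.continuous.abs fun y => ?_
  rw [abs_abs]
  exact g.norm_pow_mul_le_seminorm ℝ 3 y

/-! ### Dirichlet partial sums -/

/-- The frequencies `|k|_∞ ≤ N` kept by the Dirichlet kernel `D_N`. -/
def freqBox (N : ℕ) : Finset (ℤ × ℤ) :=
  Finset.Icc (-(N : ℤ)) N ×ˢ Finset.Icc (-(N : ℤ)) N

lemma mem_freqBox {k : ℤ × ℤ} {N : ℕ} : k ∈ freqBox N ↔ ‖k‖ ≤ N := by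
  simp only [freqBox, Prod.norm_def, sup_le_iff, Int.norm_eq_abs, Finset.mem_product,
    Finset.mem_Icc, ← abs_le]
  norm_cast

lemma dirichlet_eq_sum_planeWave (N : ℕ) (x : ℝ × ℝ) :
    dirichlet N x = ∑ k ∈ freqBox N, planeWave (freq k) x := rfl

theorem integral_dirichlet_sub_mul {f : ℝ × ℝ → ℂ} (hf : IntegrableOn f Q) (N : ℕ) (x : ℝ × ℝ) :
    (1 / (2 * π) ^ 2 : ℂ) * ∫ y in Q, dirichlet N (x - y) * f y =
      ∑ k ∈ freqBox N, torusCoeff f k * planeWave (freq k) x := by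
  have hterm (y : ℝ × ℝ) : dirichlet N (x - y) * f y =
      ∑ k ∈ freqBox N, planeWave (freq k) x * (planeWave (-freq k) y * f y) := by
    simp_rw [dirichlet_eq_sum_planeWave, sub_eq_add_neg, planeWave_add_right, planeWave_neg_right,
      Finset.sum_mul, mul_assoc]
  simp_rw [hterm]
  rw [integral_finsetSum _ fun k _ => (hf.bdd_mul (continuous_planeWave _).aestronglyMeasurable
    (.of_forall fun y => (norm_planeWave _ y).le)).const_mul _, Finset.mul_sum]
  refine Finset.sum_congr rfl fun k _ => ?_
  rw [integral_const_mul, torusCoeff]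
  ring

lemma norm_sub_sum_le_tsum_of_hasSum {ι E : Type*} [SeminormedAddCommGroup E] {a : ι → E} {b : E}
    (hab : HasSum a b) {t : Finset ι} {u : ι → ℝ} (hu : Summable u) (hu0 : ∀ k, 0 ≤ u k)
    (hle : ∀ k ∉ t, ‖a k‖ ≤ u k) : ‖b - ∑ k ∈ t, a k‖ ≤ ∑' k, u k := by
  have htail : HasSum (fun k : {k // k ∉ t} => a k) (b - ∑ k ∈ t, a k) :=
    t.hasSum_compl_iff.mpr (by rwa [sub_add_cancel])
  have hu' : Summable fun k : {k // k ∉ t} => u k := hu.subtype _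
  exact (htail.norm_le_of_bounded hu'.hasSum fun k => hle k k.2).trans
    (hu.tsum_subtype_le u {k | k ∉ t} hu0)

/-! ### The periodized mollifier -/

section Mollifier

variable (Ψ : 𝓢(ℝ × ℝ, ℝ)) {r : ℝ}

lemma continuous_periodize_scaled (hr : r ≠ 0) : Continuous (periodize (scaled Ψ r)) := by
  obtain ⟨g, hg⟩ := exists_coe_eq_scaled Ψ hr
  exact hg ▸ continuous_periodize_schwartz g

lemma setIntegral_abs_periodize_scaled_le (hr : r ≠ 0) :
    ∫ x in Q, |periodize (scaled Ψ r) x| ≤ ∫ x, |Ψ x| := by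
  obtain ⟨g, hg⟩ := exists_coe_eq_scaled Ψ hr
  rw [← integral_abs_scaled Ψ hr, ← hg]
  exact setIntegral_abs_periodize_schwartz_le g

lemma torusCoeff_periodize_scaled (hr : r ≠ 0) (k : ℤ × ℤ) :
    torusCoeff (fun x => periodize (scaled Ψ r) x) k =
      (1 / (2 * π) ^ 2 : ℂ) * planeFourier Ψ (r • freq k) := by
  obtain ⟨g, hg⟩ := exists_coe_eq_scaled Ψ hr
  rw [← planeFourier_scaled Ψ hr, ← hg]
  exact torusCoeff_periodize g.integrable k

lemma norm_torusCoeff_periodize_scaled_le {m : ℕ} {C : ℝ}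
    (hC : ∀ ξ, ‖ξ‖ ^ m * ‖planeFourier Ψ ξ‖ ≤ C) (hr : 0 < r) {k : ℤ × ℤ} (hk : 0 < ‖k‖) :
    ‖torusCoeff (fun x => periodize (scaled Ψ r) x) k‖ ≤ C * (r ^ m * ‖k‖ ^ m)⁻¹ := by
  have hnorm : ‖(1 / (2 * π) ^ 2 : ℂ)‖ ≤ 1 := by
    have : ‖(1 / (2 * π) ^ 2 : ℂ)‖ = 1 / (2 * π) ^ 2 := by simp [abs_of_pos pi_pos]
    rw [this, div_le_one (by positivity)]
    exact one_le_pow₀ (by linarith [pi_gt_three])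
  have hdecay := hC (r • freq k)
  rw [norm_smul, norm_of_nonneg hr.le, norm_freq, mul_pow] at hdecay
  rw [torusCoeff_periodize_scaled Ψ hr.ne', ← div_eq_mul_inv, le_div_iff₀' (by positivity)]
  refine le_trans ?_ hdecay
  gcongr
  rw [norm_mul]
  exact mul_le_of_le_one_left (norm_nonneg _) hnorm

lemma summable_torusCoeff_periodize_scaled (hr : 0 < r) :
    Summable (torusCoeff fun x => periodize (scaled Ψ r) x) := by
  obtain ⟨C, hC⟩ := exists_norm_pow_mul_norm_planeFourier_le Ψ 3
  refine .of_norm_bounded_eventually (summable_norm_pow_three_inv.mul_left (C * (r ^ 3)⁻¹)) ?_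
  filter_upwards [(Set.finite_singleton (0 : ℤ × ℤ)).compl_mem_cofinite] with k hk
  rw [mul_assoc, ← mul_inv]
  exact norm_torusCoeff_periodize_scaled_le Ψ hC hr (norm_pos_iff.mpr hk)

theorem hasSum_periodize_scaled (hr : 0 < r) (x : ℝ × ℝ) :
    HasSum (fun k => torusCoeff (fun y => periodize (scaled Ψ r) y) k * planeWave (freq k) x)
      (periodize (scaled Ψ r) x) :=
  hasSum_torusCoeff_mul_planeWave
    (Complex.continuous_ofReal.comp (continuous_periodize_scaled Ψ hr.ne'))
    (fun y n => congrArg Complex.ofReal (periodize_add_period _ y n))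
    (summable_torusCoeff_periodize_scaled Ψ hr) x

lemma KN_eq_sum (hr : r ≠ 0) (N : ℕ) (x : ℝ × ℝ) :
    KN Ψ r N x = ∑ k ∈ freqBox N,
      torusCoeff (fun y => periodize (scaled Ψ r) y) k * planeWave (freq k) x :=
  integral_dirichlet_sub_mul (integrableOn_Q_of_continuous
    (Complex.continuous_ofReal.comp (continuous_periodize_scaled Ψ hr))) N x

lemma continuous_KN (hr : r ≠ 0) (N : ℕ) : Continuous (KN Ψ r N) := by
  rw [funext (KN_eq_sum Ψ hr N)]
  exact continuous_finsetSum _ fun k _ => (continuous_planeWave _).const_mul _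

-- Of the `p + 3` powers of decay, `p` give the rate and three make the sum over `ℤ²` converge.
theorem exists_norm_periodize_sub_KN_le (p : ℕ) :
    ∃ C, ∀ r > 0, ∀ N : ℕ, 1 ≤ N → ∀ x,
      ‖(periodize (scaled Ψ r) x : ℂ) - KN Ψ r N x‖ ≤ C * (r ^ (p + 3) * N ^ p)⁻¹ := by
  obtain ⟨C, hC⟩ := exists_norm_pow_mul_norm_planeFourier_le Ψ (p + 3)
  have hC0 : 0 ≤ C := le_trans (by positivity) (hC 0)
  refine ⟨C * ∑' k : ℤ × ℤ, (‖k‖ ^ 3)⁻¹, fun r hr N hN x => ?_⟩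
  have hN0 : (0 : ℝ) < N := by exact_mod_cast hN
  rw [KN_eq_sum Ψ hr.ne', mul_right_comm, ← tsum_mul_left]
  refine norm_sub_sum_le_tsum_of_hasSum (hasSum_periodize_scaled Ψ hr x)
    (summable_norm_pow_three_inv.mul_left _) (fun k => by positivity) fun k hk => ?_
  have hNk : (N : ℝ) < ‖k‖ := not_le.mp (mt mem_freqBox.mpr hk)
  have hk0 : 0 < ‖k‖ := hN0.trans hNk
  rw [norm_mul, norm_planeWave, mul_one, mul_assoc, ← mul_inv]
  refine (norm_torusCoeff_periodize_scaled_le Ψ hC hr hk0).trans ?_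
  rw [mul_assoc, pow_add ‖k‖]
  gcongr

theorem exists_setIntegral_norm_periodize_sub_KN_le (p : ℕ) :
    ∃ C, ∀ r > 0, ∀ N : ℕ, 1 ≤ N →
      ∫ x in Q, ‖(periodize (scaled Ψ r) x : ℂ) - KN Ψ r N x‖ ≤ C * (r ^ (p + 3) * N ^ p)⁻¹ := by
  obtain ⟨C, hC⟩ := exists_norm_periodize_sub_KN_le Ψ p
  refine ⟨C * volume.real Q, fun r hr N hN => ?_⟩
  have hbound := norm_setIntegral_le_of_norm_le_const volume_Q_lt_top
    fun x _ => (norm_norm _).trans_le (hC r hr N hN x)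
  rw [mul_right_comm]
  exact (le_norm_self _).trans hbound

lemma setIntegral_norm_KN_le (hr : r ≠ 0) (N : ℕ) :
    ∫ x in Q, ‖KN Ψ r N x‖ ≤
      (∫ x, |Ψ x|) + ∫ x in Q, ‖(periodize (scaled Ψ r) x : ℂ) - KN Ψ r N x‖ := by
  have hψ := continuous_periodize_scaled Ψ hr
  have hK := continuous_KN Ψ hr N
  have hdiff : Continuous fun x => ‖(periodize (scaled Ψ r) x : ℂ) - KN Ψ r N x‖ := by fun_prop
  calc ∫ x in Q, ‖KN Ψ r N x‖
      ≤ ∫ x in Q, (|periodize (scaled Ψ r) x| +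
          ‖(periodize (scaled Ψ r) x : ℂ) - KN Ψ r N x‖) := by
        refine integral_mono (integrableOn_Q_of_continuous hK.norm)
          (integrableOn_Q_of_continuous (hψ.abs.add hdiff)) fun x => ?_
        rw [← Real.norm_eq_abs, ← Complex.norm_real]
        exact norm_le_norm_add_norm_sub _ _
    _ = (∫ x in Q, |periodize (scaled Ψ r) x|) +
          ∫ x in Q, ‖(periodize (scaled Ψ r) x : ℂ) - KN Ψ r N x‖ :=
        integral_add (integrableOn_Q_of_continuous hψ.abs) (integrableOn_Q_of_continuous hdiff)
    _ ≤ _ := by gcongr; exact setIntegral_abs_periodize_scaled_le Ψ hr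

end Mollifier

lemma tendsto_pow_mul_pow_atTop_of_rpow_le {ρ : ℕ → ℝ} {c δ : ℝ} (hc : 0 < c)
    (hρ : ∀ N : ℕ, 1 ≤ N → c * (N : ℝ) ^ (-1 + δ) ≤ ρ N) {m p : ℕ} (hp : m * (1 - δ) < p) :
    Tendsto (fun N : ℕ => ρ N ^ m * (N : ℝ) ^ p) atTop atTop := by
  have hpow : Tendsto (fun N : ℕ => c ^ m * (N : ℝ) ^ (p - m * (1 - δ))) atTop atTop :=
    ((tendsto_rpow_atTop (sub_pos.mpr hp)).comp tendsto_natCast_atTop_atTop).const_mul_atTop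
      (pow_pos hc m)
  refine tendsto_atTop_mono' _ ?_ hpow
  filter_upwards [eventually_ge_atTop 1] with N hN
  have hN0 : (0 : ℝ) < N := by exact_mod_cast hN
  calc c ^ m * (N : ℝ) ^ (p - m * (1 - δ))
      = (c * (N : ℝ) ^ (-1 + δ)) ^ m * (N : ℝ) ^ p := by
        rw [mul_pow, ← rpow_mul_natCast hN0.le, ← rpow_natCast (N : ℝ) p, mul_assoc,
          ← rpow_add hN0]
        ring_nf
    _ ≤ ρ N ^ m * (N : ℝ) ^ p := by gcongr; exact hρ N hN

theorem stmt11_general (Ψ : 𝓢(ℝ × ℝ, ℝ)) {ρ : ℕ → ℝ} (hρ : ∀ N, 0 < ρ N) {δ : ℝ} (hδ : 0 < δ)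
    {c : ℝ} (hc : 0 < c) (hcρ : ∀ N : ℕ, 1 ≤ N → c * (N : ℝ) ^ (-1 + δ) ≤ ρ N) :
    Tendsto (fun N : ℕ => ∫ x in Q, ‖(periodize (scaled Ψ (ρ N)) x : ℂ) - KN Ψ (ρ N) N x‖)
      atTop (𝓝 0) ∧
    ∃ C, ∀ N : ℕ, ∫ x in Q, ‖KN Ψ (ρ N) N x‖ ≤ C := by
  have hlim : Tendsto (fun N : ℕ =>
      ∫ x in Q, ‖(periodize (scaled Ψ (ρ N)) x : ℂ) - KN Ψ (ρ N) N x‖) atTop (𝓝 0) := by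
    obtain ⟨p, hp⟩ := exists_nat_gt (3 / δ)
    obtain ⟨C, hC⟩ := exists_setIntegral_norm_periodize_sub_KN_le Ψ p
    have hexp : ((p + 3 : ℕ) : ℝ) * (1 - δ) < p := by
      push_cast
      nlinarith [(div_lt_iff₀ hδ).mp hp]
    have hzero := (tendsto_pow_mul_pow_atTop_of_rpow_le hc hcρ hexp).inv_tendsto_atTop.const_mul C
    rw [mul_zero] at hzero
    refine squeeze_zero' (.of_forall fun N => by positivity) ?_ hzero
    filter_upwards [eventually_ge_atTop 1] with N hN using hC _ (hρ N) N hN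
  obtain ⟨B, hB⟩ := hlim.bddAbove_range
  refine ⟨hlim, (∫ x, |Ψ x|) + B, fun N => ?_⟩
  exact (setIntegral_norm_KN_le Ψ (hρ N).ne' N).trans
    (add_le_add_right (hB (Set.mem_range_self N)) _)

/-- Let `Ψ ∈ C_c^∞(ℝ²)` be nonnegative with `∫ Ψ = 1` and support in `(-π,π)²`, let
`ψ_ρ` be the periodization of `Ψ_ρ(x) = ρ⁻² Ψ(x/ρ)`, and `K_N = D_N ∗ ψ_{ρ_N}` with
`ρ_N ∼ N^{-1+δ}`, `δ > 0`. Then `‖ψ_{ρ_N} - K_N‖_{L¹(𝕋²)} → 0` as `N → ∞`, and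
consequently `‖K_N‖_{L¹}` is uniformly bounded in `N`. -/
theorem stmt11 (Ψ : ℝ × ℝ → ℝ) (hsm : ContDiff ℝ (⊤ : ℕ∞) Ψ)
    (hsupp : tsupport Ψ ⊆ Set.Ioo (-π) π ×ˢ Set.Ioo (-π) π)
    (h0 : ∀ x, 0 ≤ Ψ x) (h1 : ∫ x, Ψ x = 1)
    (ρ : ℕ → ℝ) (hρ : ∀ N, 0 < ρ N) (δ : ℝ) (hδ : 0 < δ)
    (hasym : ∃ c₁ > (0 : ℝ), ∃ c₂ > (0 : ℝ), ∀ N : ℕ, 1 ≤ N →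
      c₁ * (N : ℝ) ^ (-1 + δ) ≤ ρ N ∧ ρ N ≤ c₂ * (N : ℝ) ^ (-1 + δ)) :
    Filter.Tendsto (fun N : ℕ =>
        ∫ x in Q, ‖((periodize (scaled Ψ (ρ N)) x : ℝ) : ℂ) - KN Ψ (ρ N) N x‖)
      Filter.atTop (nhds 0) ∧
    ∃ C : ℝ, ∀ N : ℕ, (∫ x in Q, ‖KN Ψ (ρ N) N x‖) ≤ C := by
  have hcs : HasCompactSupport Ψ := Metric.isCompact_of_isClosed_isBounded (isClosed_tsupport Ψ)
    (((Metric.isBounded_Ioo (-π) π).prod (Metric.isBounded_Ioo (-π) π)).subset hsupp)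
  obtain ⟨c, hc, _, _, hcρ⟩ := hasym
  exact stmt11_general (hcs.toSchwartzMap hsm) hρ hδ hc fun N hN => (hcρ N hN).1
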